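/- Let i ∈ {1, n}, let 𝓕_i be an EKR-set of totally isotropic i-spaces of maximum cardinality among all EKR-sets of i-spaces, and let J ⊆ [n] be nonempty with i ∉ J. Then 𝓕_i contains two i-spaces I₁ and I₂ that can be extended to flags F₁ and F₂ of type {i} ∪ J (so the i-space of F_k is I_k for k = 1, 2) such that the subflags of F₁ and F₂ of type J are opposite. -/

import Mathlib

open scoped Classical

open Module

section Defs

variable {F V : Type} [Field F] [AddCommGroup V] [Module F V]

/-- The orthogonal complement of a subspace with respect to a bilinear form. -/
def bperp (B : V →ₗ[F] V →ₗ[F] F) (W : Submodule F V) : Submodule F V :=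
  ⨅ w ∈ W, LinearMap.ker (B w)

/-- A subspace is totally isotropic for `B`. -/
def IsTotIso (B : V →ₗ[F] V →ₗ[F] F) (W : Submodule F V) : Prop :=
  ∀ u ∈ W, ∀ w ∈ W, B u w = 0

/-- `B` is an alternating form. -/
def IsAltForm (B : V →ₗ[F] V →ₗ[F] F) : Prop := ∀ v, B v v = 0

/-- `B` is nondegenerate. -/
def NondegForm (B : V →ₗ[F] V →ₗ[F] F) : Prop := ∀ v, (∀ w, B v w = 0) → v = 0

/-- A flag of type `J` of totally isotropic subspaces: entries outside `J` are `⊥`. -/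
structure SFlag (B : V →ₗ[F] V →ₗ[F] F) (J : Finset ℕ) where
  space : ℕ → Submodule F V
  isotropic : ∀ i ∈ J, IsTotIso B (space i)
  finrank_eq : ∀ i ∈ J, Module.finrank F (space i) = i
  mono : ∀ i ∈ J, ∀ j ∈ J, i ≤ j → space i ≤ space j
  eq_bot : ∀ i, i ∉ J → space i = ⊥

/-- Two flags of type `J` are opposite. -/
def FlagOpp {B : V →ₗ[F] V →ₗ[F] F} {J : Finset ℕ} (C C' : SFlag B J) : Prop :=
  ∀ i ∈ J, bperp B (C.space i) ⊓ C'.space i = ⊥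

/-- An EKR-set of flags of type `J`: no two members are opposite. -/
def IsEKRFlags {B : V →ₗ[F] V →ₗ[F] F} {J : Finset ℕ} (𝓕 : Set (SFlag B J)) : Prop :=
  ∀ C ∈ 𝓕, ∀ C' ∈ 𝓕, ¬ FlagOpp C C'

/-- Two subspaces are opposite. -/
def SpaceOpp (B : V →ₗ[F] V →ₗ[F] F) (S T : Submodule F V) : Prop :=
  bperp B S ⊓ T = ⊥

/-- An EKR-set of totally isotropic `s`-spaces: no two members are opposite. -/
def IsEKRSpaces (B : V →ₗ[F] V →ₗ[F] F) (s : ℕ) (𝓕 : Set (Submodule F V)) : Prop :=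
  (∀ S ∈ 𝓕, IsTotIso B S ∧ Module.finrank F S = s) ∧
    ∀ S ∈ 𝓕, ∀ T ∈ 𝓕, ¬ SpaceOpp B S T

/-- An `s`-space `S` is heavy with respect to a set `𝓕` of flags: every flag whose
`s`-th entry equals `S` belongs to `𝓕`. -/
def Heavy {B : V →ₗ[F] V →ₗ[F] F} {J : Finset ℕ} (𝓕 : Set (SFlag B J)) (s : ℕ)
    (S : Submodule F V) : Prop :=
  ∀ C : SFlag B J, C.space s = S → C ∈ 𝓕

end Defs

/-- `z_k = ∏_{i=1}^k (q^i-1)/(q-1)`. -/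
noncomputable def zpol (q k : ℕ) : ℝ :=
  ∏ i ∈ Finset.Icc 1 k, ((q : ℝ) ^ i - 1) / ((q : ℝ) - 1)

/-- The Gaussian binomial coefficient `[m choose k]_q` as a real number. -/
noncomputable def gaussq (q m k : ℕ) : ℝ :=
  ∏ i ∈ Finset.Icc 1 k, ((q : ℝ) ^ (m - k + i) - 1) / ((q : ℝ) ^ i - 1)

/-- `Φ_m^s` in `PS(n,1,q)`: the number of totally isotropic `s`-spaces containing a
fixed totally isotropic `m`-space. -/
noncomputable def PhiP (q n m s : ℕ) : ℝ :=
  gaussq q (n - m) (s - m) * ∏ i ∈ Finset.Icc 1 (s - m), ((q : ℝ) ^ (n - m + 1 - i) + 1)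

section Aux

variable {F V : Type} [Field F] [AddCommGroup V] [Module F V]

lemma eq_span_of_finrank_one [FiniteDimensional F V] {P : Submodule F V}
    (h : finrank F P = 1) : ∃ p : V, p ≠ 0 ∧ P = F ∙ p := by
  have hne : P ≠ ⊥ := by rintro rfl; simp at h
  obtain ⟨p, hp, hp0⟩ := Submodule.exists_mem_ne_zero_of_ne_bot hne
  refine ⟨p, hp0, (Submodule.eq_of_le_of_finrank_eq (by simpa using hp) ?_).symm⟩
  rw [finrank_span_singleton hp0, h]

lemma mem_bperp' (B : V →ₗ[F] V →ₗ[F] F) (W : Submodule F V) (v : V) :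
    v ∈ bperp B W ↔ ∀ w ∈ W, B w v = 0 := by
  simp [bperp, Submodule.mem_iInf]

lemma alt_neg {B : V →ₗ[F] V →ₗ[F] F} (h : IsAltForm B) (x y : V) : B x y = - B y x := by
  have := h (x + y)
  simp only [map_add, LinearMap.add_apply, h x, h y] at this
  linear_combination this

lemma alt_zero {B : V →ₗ[F] V →ₗ[F] F} (h : IsAltForm B) {x y : V} (h0 : B x y = 0) :
    B y x = 0 := by
  rw [alt_neg h, h0, neg_zero]

lemma finrank_bperp [FiniteDimensional F V] {B : V →ₗ[F] V →ₗ[F] F} (h : IsAltForm B)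
    (hnd : NondegForm B) (W : Submodule F V) :
    finrank F (bperp B W) = finrank F V - finrank F W := by
  have h1 : LinearMap.BilinForm.Nondegenerate (B : LinearMap.BilinForm F V) := by
    constructor
    · intro x hx
      exact hnd x hx
    · intro x hx
      exact hnd x fun w => alt_zero h (hx w)
  rw [← LinearMap.BilinForm.finrank_orthogonal h1 W]
  have : bperp B W = LinearMap.BilinForm.orthogonal (B : LinearMap.BilinForm F V) W := by
    ext v
    rw [mem_bperp', LinearMap.BilinForm.mem_orthogonal_iff]
  rw [this]

/-- initial span -/
def ispan (F : Type) {V : Type} [Field F] [AddCommGroup V] [Module F V] (a : ℕ → V) (j : ℕ) :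
    Submodule F V := Submodule.span F (Set.range fun i : Fin j => a i)

lemma mem_ispan (a : ℕ → V) (j : ℕ) (v : V) :
    v ∈ ispan F a j ↔ ∃ c : Fin j → F, ∑ i, c i • a i = v := by
  unfold ispan
  rw [Submodule.mem_span_range_iff_exists_fun]

lemma mem_ispan_self (a : ℕ → V) {j i : ℕ} (h : i < j) : a i ∈ ispan F a j :=
  Submodule.subset_span ⟨⟨i, h⟩, rfl⟩

lemma ispan_le {a : ℕ → V} {j : ℕ} {W : Submodule F V} (h : ∀ i < j, a i ∈ W) :
    ispan F a j ≤ W := by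
  unfold ispan
  rw [Submodule.span_le]
  rintro _ ⟨i, rfl⟩
  exact h i i.2

lemma ispan_mono (a : ℕ → V) {j k : ℕ} (h : j ≤ k) : ispan F a j ≤ ispan F a k :=
  ispan_le fun _ hi => mem_ispan_self a (by omega)

lemma span_iso {B : V →ₗ[F] V →ₗ[F] F} {s : Set V}
    (h : ∀ u ∈ s, ∀ v ∈ s, B u v = 0) : IsTotIso B (Submodule.span F s) := by
  intro u hu v hv
  induction hu using Submodule.span_induction with
  | mem x hx =>
    induction hv using Submodule.span_induction with
    | mem y hy => exact h x hx y hy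
    | zero => simp
    | add y z _ _ h1 h2 => simp [h1, h2]
    | smul c y _ h1 => simp [h1]
  | zero => simp
  | add y z _ _ h1 h2 => simp [h1, h2]
  | smul c y _ h1 => simp [h1]

lemma ispan_iso {B : V →ₗ[F] V →ₗ[F] F} {a : ℕ → V} {m : ℕ}
    (h : ∀ i < m, ∀ j < m, B (a i) (a j) = 0) : IsTotIso B (ispan F a m) := by
  apply span_iso
  rintro _ ⟨i, rfl⟩ _ ⟨j, rfl⟩
  exact h i i.2 j j.2

lemma iso_mono {B : V →ₗ[F] V →ₗ[F] F} {W U : Submodule F V} (h : W ≤ U) (hU : IsTotIso B U) :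
    IsTotIso B W := fun u hu v hv => hU u (h hu) v (h hv)

/-- dual systems -/
def Dualsys (B : V →ₗ[F] V →ₗ[F] F) (m : ℕ) (a b : ℕ → V) : Prop :=
  ∀ i < m, ∀ j < m, B (a i) (b j) = if i = j then 1 else 0

lemma Dualsys.opp {B : V →ₗ[F] V →ₗ[F] F} {m : ℕ} {a b : ℕ → V} (h : Dualsys B m a b)
    {j : ℕ} (hj : j ≤ m) : bperp B (ispan F a j) ⊓ ispan F b j = ⊥ := by
  rw [eq_bot_iff]
  rintro v ⟨h1, h2⟩
  rw [SetLike.mem_coe, mem_bperp'] at h1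
  obtain ⟨c, rfl⟩ := (mem_ispan b j v).1 h2
  have : ∀ k : Fin j, c k = 0 := by
    intro k
    have := h1 (a k) (mem_ispan_self a k.2)
    simp only [map_sum, map_smul, smul_eq_mul] at this
    rw [Finset.sum_eq_single k] at this
    · simpa [h k (by omega) k (by omega)] using this
    · intro l _ hl
      rw [h k (by omega) l (by omega), if_neg, mul_zero]
      intro h; exact hl (Fin.ext h.symm)
    · simp
  simp [this]

lemma Dualsys.finrank_right {B : V →ₗ[F] V →ₗ[F] F} {m : ℕ} {a b : ℕ → V} (h : Dualsys B m a b)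
    {j : ℕ} (hj : j ≤ m) : finrank F (ispan F b j) = j := by
  have : LinearIndependent F (fun i : Fin j => b i) := by
    rw [Fintype.linearIndependent_iff]
    intro c hc k
    have := congrArg (B (a k)) hc
    simp only [map_sum, map_smul, smul_eq_mul, map_zero] at this
    rw [Finset.sum_eq_single k] at this
    · simpa [h k (by omega) k (by omega)] using this
    · intro l _ hl
      rw [h k (by omega) l (by omega), if_neg, mul_zero]
      intro h; exact hl (Fin.ext h.symm)
    · simp
  have h2 := finrank_span_eq_card this
  rw [Fintype.card_fin] at h2
  exact h2

lemma Dualsys.finrank_left {B : V →ₗ[F] V →ₗ[F] F} {m : ℕ} {a b : ℕ → V} (h : Dualsys B m a b)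
    {j : ℕ} (hj : j ≤ m) : finrank F (ispan F a j) = j := by
  have h' : Dualsys B.flip m b a := by
    intro i hi k hk
    rw [LinearMap.flip_apply, h k hk i hi]
    simp [eq_comm]
  exact h'.finrank_right hj

/-- symplectic frames -/
def Frame (B : V →ₗ[F] V →ₗ[F] F) (m : ℕ) (a b : ℕ → V) : Prop :=
  Dualsys B m a b ∧ (∀ i < m, ∀ j < m, B (a i) (a j) = 0) ∧ (∀ i < m, ∀ j < m, B (b i) (b j) = 0)

lemma Frame.succ [FiniteDimensional F V] {B : V →ₗ[F] V →ₗ[F] F} (halt : IsAltForm B)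
    (hnd : NondegForm B) {m : ℕ} {a b : ℕ → V} (h : Frame B m a b)
    (hm : 2 * m < finrank F V) :
    ∃ a' b', Frame B (m + 1) a' b' ∧ (∀ i < m, a' i = a i) ∧ (∀ i < m, b' i = b i) := by
  obtain ⟨hd, ha, hb⟩ := h
  set W := ispan F a m ⊔ ispan F b m with hW
  have hWr : finrank F W ≤ 2 * m := by
    have := Submodule.finrank_add_le_finrank_add_finrank (ispan F a m) (ispan F b m)
    rw [← hW, hd.finrank_left le_rfl, hd.finrank_right le_rfl] at this
    omega
  have hne : bperp B W ≠ ⊥ := by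
    intro h0
    have := finrank_bperp halt hnd W
    rw [h0, finrank_bot] at this
    omega
  obtain ⟨x, hx, hx0⟩ := Submodule.exists_mem_ne_zero_of_ne_bot hne
  rw [mem_bperp'] at hx
  have hxa : ∀ i < m, B (a i) x = 0 := fun i hi =>
    hx _ (Submodule.mem_sup_left (mem_ispan_self a hi))
  have hxb : ∀ i < m, B (b i) x = 0 := fun i hi =>
    hx _ (Submodule.mem_sup_right (mem_ispan_self b hi))
  obtain ⟨z, hz⟩ : ∃ z, B x z ≠ 0 := by
    by_contra! hcon
    exact hx0 (hnd x hcon)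
  set y0 := (B x z)⁻¹ • z with hy0
  have hxy0 : B x y0 = 1 := by simp [hy0, hz]
  set y := y0 - ∑ i : Fin m, B (a i) y0 • b i + ∑ i : Fin m, B (b i) y0 • a i with hy
  have hxy : B x y = 1 := by
    simp only [hy, map_add, map_sub, map_sum, map_smul, hxy0]
    rw [Finset.sum_eq_zero, Finset.sum_eq_zero]
    · simp
    · intro i _; rw [alt_zero halt (hxa i i.2)]; simp
    · intro i _; rw [alt_zero halt (hxb i i.2)]; simp
  have hay : ∀ i < m, B (a i) y = 0 := by
    intro k hk
    simp only [hy, map_add, map_sub, map_sum, map_smul]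
    rw [Finset.sum_eq_single ⟨k, hk⟩, Finset.sum_eq_zero]
    · simp [hd k hk k hk]
    · intro i _; rw [ha k hk i i.2]; simp
    · intro i _ hi; rw [hd k hk i i.2, if_neg]; · simp
      intro h; exact hi (Fin.ext h.symm)
    · simp
  have hby : ∀ i < m, B (b i) y = 0 := by
    intro k hk
    simp only [hy, map_add, map_sub, map_sum, map_smul]
    rw [Finset.sum_eq_zero, Finset.sum_eq_single ⟨k, hk⟩]
    · rw [alt_neg halt (b k) (a _)]; simp [hd k hk k hk]
    · intro i _ hi; rw [alt_neg halt (b k) (a i), hd i i.2 k hk, if_neg]; · simp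
      intro h; exact hi (Fin.ext h)
    · simp
    · intro i _; rw [hb k hk i i.2]; simp
  have hcase : ∀ i < m + 1, i < m ∨ i = m := fun i hi => by omega
  refine ⟨Function.update a m x, Function.update b m y, ⟨?_, ?_, ?_⟩, ?_, ?_⟩
  · intro i hi j hj
    rcases hcase i hi with hi | rfl <;> rcases hcase j hj with hj | rfl
    · rw [Function.update_of_ne hi.ne, Function.update_of_ne hj.ne, hd i hi j hj]
    · rw [Function.update_of_ne hi.ne, Function.update_self, hay i hi, if_neg hi.ne]
    · rw [Function.update_of_ne hj.ne, Function.update_self, alt_zero halt (hxb j hj),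
        if_neg hj.ne']
    · simp [hxy]
  · intro i hi j hj
    rcases hcase i hi with hi | rfl <;> rcases hcase j hj with hj | rfl
    · rw [Function.update_of_ne hi.ne, Function.update_of_ne hj.ne, ha i hi j hj]
    · rw [Function.update_of_ne hi.ne, Function.update_self, hxa i hi]
    · rw [Function.update_of_ne hj.ne, Function.update_self, alt_zero halt (hxa j hj)]
    · exact halt _
  · intro i hi j hj
    rcases hcase i hi with hi | rfl <;> rcases hcase j hj with hj | rfl
    · rw [Function.update_of_ne hi.ne, Function.update_of_ne hj.ne, hb i hi j hj]
    · rw [Function.update_of_ne hi.ne, Function.update_self, hby i hi]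
    · rw [Function.update_of_ne hj.ne, Function.update_self, alt_zero halt (hby j hj)]
    · exact halt _
  · intro i hi; rw [Function.update_of_ne hi.ne]
  · intro i hi; rw [Function.update_of_ne hi.ne]

lemma Frame.extend [FiniteDimensional F V] {B : V →ₗ[F] V →ₗ[F] F} (halt : IsAltForm B)
    (hnd : NondegForm B) {n : ℕ} (hdim : finrank F V = 2 * n) {m : ℕ} {a b : ℕ → V}
    (h : Frame B m a b) (k : ℕ) (hk : m + k ≤ n) :
    ∃ a' b', Frame B (m + k) a' b' ∧ (∀ i < m, a' i = a i) ∧ (∀ i < m, b' i = b i) := by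
  induction k with
  | zero => exact ⟨a, b, h, fun _ _ => rfl, fun _ _ => rfl⟩
  | succ k ih =>
    obtain ⟨a1, b1, h1, h2, h3⟩ := ih (by omega)
    obtain ⟨a2, b2, h4, h5, h6⟩ := h1.succ halt hnd (by omega)
    exact ⟨a2, b2, h4, fun i hi => by rw [h5 i (by omega), h2 i hi],
      fun i hi => by rw [h6 i (by omega), h3 i hi]⟩

lemma exists_frame [FiniteDimensional F V] {B : V →ₗ[F] V →ₗ[F] F} (halt : IsAltForm B)
    (hnd : NondegForm B) {n : ℕ} (hdim : finrank F V = 2 * n) : ∃ a b, Frame B n a b := by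
  have h0 : Frame B 0 (0 : ℕ → V) 0 := by
    refine ⟨?_, ?_, ?_⟩ <;> intro i hi <;> omega
  obtain ⟨a, b, h, -, -⟩ := h0.extend halt hnd hdim n (by omega)
  exact ⟨a, b, by simpa using h⟩

/-- dual bases of two paired subspaces -/
lemma exists_dualsys [FiniteDimensional F V] {B : V →ₗ[F] V →ₗ[F] F} {m : ℕ}
    {H₁ H₂ : Submodule F V} (h1 : finrank F H₁ = m) (h2 : finrank F H₂ = m)
    (hopp : bperp B H₁ ⊓ H₂ = ⊥) :
    ∃ a b : ℕ → V, Dualsys B m a b ∧ (∀ i < m, a i ∈ H₁) ∧ (∀ i < m, b i ∈ H₂) := by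
  let φ : H₂ →ₗ[F] Dual F H₁ := (B.flip.domRestrict₁₂ H₂ H₁)
  have hφ : ∀ x y, φ x y = B y x := fun x y => rfl
  have hinj : Function.Injective φ := by
    rw [← LinearMap.ker_eq_bot, eq_bot_iff]
    intro x hx
    have : (x : V) ∈ bperp B H₁ ⊓ H₂ := by
      refine ⟨?_, x.2⟩
      rw [SetLike.mem_coe, mem_bperp']
      intro w hw
      have := LinearMap.congr_fun (LinearMap.mem_ker.1 hx) ⟨w, hw⟩
      simpa [hφ] using this
    rw [hopp] at this
    simpa using this
  have hsurj : Function.Surjective φ :=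
    (LinearMap.injective_iff_surjective_of_finrank_eq_finrank
      (by rw [h2, Subspace.dual_finrank_eq, h1])).1 hinj
  let e := finBasisOfFinrankEq F H₁ h1
  choose f hf using fun i => hsurj (e.coord i)
  refine ⟨fun i => if h : i < m then (e ⟨i, h⟩ : V) else 0,
    fun i => if h : i < m then (f ⟨i, h⟩ : V) else 0, ?_, ?_, ?_⟩
  · intro i hi j hj
    simp only [hi, hj, dif_pos]
    rw [← hφ, hf]
    simp [Finsupp.single_apply]
  · intro i hi; simp [hi]
  · intro i hi; simp [hi]

/-- build a flag -/
noncomputable def mkFlag (B : V →ₗ[F] V →ₗ[F] F) (K : Finset ℕ) (S : ℕ → Submodule F V)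
    (h1 : ∀ i ∈ K, IsTotIso B (S i)) (h2 : ∀ i ∈ K, finrank F (S i) = i)
    (h3 : ∀ i ∈ K, ∀ j ∈ K, i ≤ j → S i ≤ S j) : SFlag B K where
  space i := if i ∈ K then S i else ⊥
  isotropic i hi := by rw [if_pos hi]; exact h1 i hi
  finrank_eq i hi := by rw [if_pos hi]; exact h2 i hi
  mono i hi j hj hij := by rw [if_pos hi, if_pos hj]; exact h3 i hi j hj hij
  eq_bot i hi := by rw [if_neg hi]

lemma mkFlag_space (B : V →ₗ[F] V →ₗ[F] F) (K : Finset ℕ) (S : ℕ → Submodule F V)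
    (h1 : ∀ i ∈ K, IsTotIso B (S i)) (h2 : ∀ i ∈ K, finrank F (S i) = i)
    (h3 : ∀ i ∈ K, ∀ j ∈ K, i ≤ j → S i ≤ S j) (i : ℕ) (hi : i ∈ K) :
    (mkFlag B K S h1 h2 h3).space i = S i := if_pos hi

/-- complement trick -/
lemma exists_hyper [FiniteDimensional F V] (T P : Submodule F V) (hP : P ≤ T) :
    ∃ H ≤ T, H ⊓ P = ⊥ ∧ H ⊔ P = T ∧ finrank F H + finrank F P = finrank F T := by
  obtain ⟨Q, hQ⟩ := exists_isCompl P
  have h1 : (Q ⊓ T) ⊓ P = ⊥ := by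
    rw [eq_bot_iff, ← hQ.inf_eq_bot]
    exact le_inf inf_le_right (inf_le_left.trans inf_le_left)
  have h2 : (Q ⊓ T) ⊔ P = T := by
    rw [sup_comm, ← sup_inf_assoc_of_le Q hP, hQ.sup_eq_top, top_inf_eq]
  refine ⟨Q ⊓ T, inf_le_right, h1, h2, ?_⟩
  have := Submodule.finrank_sup_add_finrank_inf_eq (Q ⊓ T) P
  rw [h1, h2, finrank_bot] at this
  omega

lemma not_opp_self {B : V →ₗ[F] V →ₗ[F] F} {T : Submodule F V} (h : IsTotIso B T)
    (h0 : T ≠ ⊥) : ¬ SpaceOpp B T T := by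
  intro ho
  apply h0
  rw [eq_bot_iff, ← ho]
  exact le_inf (fun x hx => (mem_bperp' B T x).2 fun w hw => h w hw x hx) le_rfl

lemma perp_eq_self [FiniteDimensional F V] {B : V →ₗ[F] V →ₗ[F] F} (halt : IsAltForm B)
    (hnd : NondegForm B) {n : ℕ} (hdim : finrank F V = 2 * n) {T : Submodule F V}
    (hT : IsTotIso B T) (hTn : finrank F T = n) : bperp B T = T := by
  symm
  apply Submodule.eq_of_le_of_finrank_eq
  · exact fun x hx => (mem_bperp' B T x).2 fun w hw => hT w hw x hx
  · rw [finrank_bperp halt hnd, hdim, hTn]; omega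

/-- the neighbour construction -/
lemma exists_neighbour [FiniteDimensional F V] {B : V →ₗ[F] V →ₗ[F] F} (halt : IsAltForm B)
    (hnd : NondegForm B) {n : ℕ} (hdim : finrank F V = 2 * n) {S T : Submodule F V}
    (hS : IsTotIso B S)
    (hT : IsTotIso B T) (hTn : finrank F T = n) {p : V} (hp0 : p ≠ 0) (hpS : p ∈ S)
    (hpT : p ∈ T) :
    ∃ T' : Submodule F V, IsTotIso B T' ∧ finrank F T' = n ∧
      finrank F (T' ⊓ S : Submodule F V) < finrank F (T ⊓ S : Submodule F V) ∧
      (∀ R : Submodule F V, 2 ≤ finrank F (T ⊓ R : Submodule F V) → T' ⊓ R ≠ ⊥) := by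
  obtain ⟨H, hHT, hHP, hsup, hfr⟩ := exists_hyper T (F ∙ p) (by simpa using hpT)
  rw [finrank_span_singleton hp0, hTn] at hfr
  obtain ⟨v, hvH, hvT⟩ : ∃ v ∈ bperp B H, v ∉ T := by
    by_contra! hcon
    have := Submodule.finrank_mono (show bperp B H ≤ T from hcon)
    rw [finrank_bperp halt hnd, hdim, hTn] at this
    omega
  rw [mem_bperp'] at hvH
  have hpv : B v p ≠ 0 := by
    intro h0
    apply hvT
    rw [← perp_eq_self halt hnd hdim hT hTn, mem_bperp', ← hsup]
    intro w hw
    obtain ⟨h, hh, z, hz, rfl⟩ := Submodule.mem_sup.1 hw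
    obtain ⟨c, rfl⟩ := Submodule.mem_span_singleton.1 hz
    simp [hvH h hh, alt_zero halt h0]
  have hv0 : v ≠ 0 := fun h => hvT (h ▸ T.zero_mem)
  have hpH : p ∉ H := by
    intro h
    have : p ∈ H ⊓ (F ∙ p) := ⟨h, Submodule.mem_span_singleton_self p⟩
    rw [hHP] at this
    exact hp0 (by simpa using this)
  have hle : H ⊔ (F ∙ v) ⊓ ⊤ ≤ H ⊔ (F ∙ v) := by simp
  refine ⟨H ⊔ (F ∙ v), ?_, ?_, ?_, ?_⟩
  · intro x hx y hy
    obtain ⟨h, hh, z, hz, rfl⟩ := Submodule.mem_sup.1 hx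
    obtain ⟨c, rfl⟩ := Submodule.mem_span_singleton.1 hz
    obtain ⟨h', hh', z', hz', rfl⟩ := Submodule.mem_sup.1 hy
    obtain ⟨c', rfl⟩ := Submodule.mem_span_singleton.1 hz'
    simp [hT h (hHT hh) h' (hHT hh'), hvH h hh, alt_zero halt (hvH h' hh'), halt v]
  · have h1 := Submodule.finrank_sup_add_finrank_inf_eq H (F ∙ v)
    have h2 : H ⊓ (F ∙ v) = ⊥ := by
      rw [eq_bot_iff]
      rintro x ⟨hx, hxv⟩
      obtain ⟨c, rfl⟩ := Submodule.mem_span_singleton.1 hxv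
      by_cases hc : c = 0
      · simp [hc]
      · exact absurd (hHT ((H.smul_mem_iff hc).1 hx)) hvT
    rw [h2, finrank_bot, finrank_span_singleton hv0] at h1
    omega
  · apply Submodule.finrank_lt_finrank_of_lt
    have hsub : (H ⊔ (F ∙ v)) ⊓ S ≤ H := by
      rintro x ⟨hx, hxS⟩
      obtain ⟨h, hh, z, hz, rfl⟩ := Submodule.mem_sup.1 hx
      obtain ⟨c, rfl⟩ := Submodule.mem_span_singleton.1 hz
      have := hS _ hxS p hpS
      simp only [map_add, LinearMap.add_apply, map_smul, LinearMap.smul_apply,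
        hT h (hHT hh) p hpT, smul_eq_mul, zero_add] at this
      have hc : c = 0 := by simpa [hpv] using this
      simpa [hc] using hh
    refine lt_of_le_of_ne (le_inf (hsub.trans hHT) inf_le_right) ?_
    intro heq
    have : p ∈ T ⊓ S := ⟨hpT, hpS⟩
    rw [← heq] at this
    exact hpH (hsub this)
  · intro R hR h0
    have h1 : H ⊓ (T ⊓ R) = ⊥ := by
      rw [eq_bot_iff, ← h0]
      exact inf_le_inf le_sup_left inf_le_right
    have h2 := Submodule.finrank_sup_add_finrank_inf_eq H (T ⊓ R)
    have h3 := Submodule.finrank_mono (sup_le hHT (inf_le_left : T ⊓ R ≤ T))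
    rw [h1, finrank_bot] at h2
    omega

end Aux

section Aux2

variable {F V : Type} [Field F] [AddCommGroup V] [Module F V]

lemma exists_sep {B : V →ₗ[F] V →ₗ[F] F} (hnd : NondegForm B) {p r : V} (hr : r ≠ 0)
    (h : ∀ c : F, p ≠ c • r) : ∃ b, B p b = 1 ∧ B r b = 0 := by
  obtain ⟨z, hz⟩ : ∃ z, B r z ≠ 0 := by
    by_contra! hcon
    exact hr (hnd r hcon)
  by_contra! hcon
  apply h (B p z / B r z)
  rw [← sub_eq_zero]
  apply hnd
  intro w
  by_contra hw
  have hw' : B p (w - (B r w / B r z) • z) ≠ 0 := by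
    intro h0
    apply hw
    simp only [map_sub, map_smul, LinearMap.sub_apply, LinearMap.smul_apply, smul_eq_mul] at h0 ⊢
    rw [← h0]
    field_simp
  apply hcon ((B p (w - (B r w / B r z) • z))⁻¹ • (w - (B r w / B r z) • z))
  · rw [map_smul, smul_eq_mul, inv_mul_cancel₀ hw']
  · simp [hz]

lemma frame_two {B : V →ₗ[F] V →ₗ[F] F} (halt : IsAltForm B) (hnd : NondegForm B) {p r : V}
    (hp : p ≠ 0) (hr : r ≠ 0)
    (h : ∀ c : F, p ≠ c • r) (hpr : B p r = 0) :
    ∃ a b, Frame B 2 a b ∧ a 0 = p ∧ b 1 = r := by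
  obtain ⟨x, hx1, hx2⟩ := exists_sep hnd hr h
  have h' : ∀ c : F, r ≠ c • p := by
    intro c hc
    have hc0 : c ≠ 0 := by rintro rfl; simp at hc; exact hr hc
    apply h c⁻¹
    rw [hc, smul_smul, inv_mul_cancel₀ hc0, one_smul]
  obtain ⟨y, hy1, hy2⟩ := exists_sep hnd hp h'
  let y' := -y + (B y x) • p
  have e1 : B y' r = 1 := by
    simp [y', hpr, alt_neg halt y r, hy1]
  have e2 : B y' p = 0 := by
    simp [y', halt p, alt_neg halt y p, hy2]
  have e3 : B y' x = 0 := by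
    simp [y', hx1]
  refine ⟨fun i => if i = 0 then p else y', fun i => if i = 0 then x else r, ⟨?_, ?_, ?_⟩, rfl, rfl⟩
  · intro i hi j hj
    interval_cases i <;> interval_cases j <;> simp [hx1, hpr, e1, e3]
  · intro i hi j hj
    interval_cases i <;> interval_cases j <;> simp [halt p, halt y', e2, alt_zero halt e2]
  · intro i hi j hj
    interval_cases i <;> interval_cases j <;> simp [halt x, halt r, hx2, alt_zero halt hx2]

lemma span_opp {B : V →ₗ[F] V →ₗ[F] F} {p r : V} (h : B p r ≠ 0) :
    SpaceOpp B (F ∙ p) (F ∙ r) := by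
  unfold SpaceOpp
  rw [eq_bot_iff]
  rintro x ⟨hx, hxr⟩
  obtain ⟨c, rfl⟩ := Submodule.mem_span_singleton.1 hxr
  have := (mem_bperp' B _ _).1 hx p (Submodule.mem_span_singleton_self p)
  have hc : c = 0 := by simpa [h] using this
  simp [hc]

lemma span_not_opp {B : V →ₗ[F] V →ₗ[F] F} {p r : V} (hr : r ≠ 0) (h : B p r = 0) :
    ¬ SpaceOpp B (F ∙ p) (F ∙ r) := by
  intro ho
  have : r ∈ bperp B (F ∙ p) ⊓ (F ∙ r) := by
    refine ⟨(mem_bperp' B _ _).2 ?_, Submodule.mem_span_singleton_self r⟩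
    intro w hw
    obtain ⟨c, rfl⟩ := Submodule.mem_span_singleton.1 hw
    simp [h]
  rw [ho] at this
  exact hr (by simpa using this)

lemma case_one [Fintype F] [FiniteDimensional F V] (n : ℕ) (hn : 3 ≤ n)
    (B : V →ₗ[F] V →ₗ[F] F) (halt : IsAltForm B) (hnd : NondegForm B)
    (hdim : Module.finrank F V = 2 * n)
    (𝓕i : Set (Submodule F V)) (hEKR : IsEKRSpaces B 1 𝓕i)
    (hmax : ∀ 𝓖 : Set (Submodule F V), IsEKRSpaces B 1 𝓖 → 𝓖.ncard ≤ 𝓕i.ncard)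
    (J : Finset ℕ) (hJ : J ⊆ Finset.Icc 1 n) (hiJ : 1 ∉ J) :
    ∃ I₁ ∈ 𝓕i, ∃ I₂ ∈ 𝓕i, ∃ F₁ F₂ : SFlag B (insert 1 J),
      SFlag.space F₁ 1 = I₁ ∧ SFlag.space F₂ 1 = I₂ ∧
      ∀ j ∈ J, bperp B (SFlag.space F₁ j) ⊓ SFlag.space F₂ j = ⊥ := by
  have h2 : 2 ≤ 𝓕i.ncard := by
    obtain ⟨a, b, hd, ha, -⟩ := exists_frame halt hnd hdim
    have h00 := hd 0 (by omega) 0 (by omega)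
    have h11 := hd 1 (by omega) 1 (by omega)
    have h10 := hd 1 (by omega) 0 (by omega)
    have hne0 : a 0 ≠ 0 := by intro h; simp [h] at h00
    have hne1 : a 1 ≠ 0 := by intro h; simp [h] at h11
    have hne : (F ∙ a 0) ≠ (F ∙ a 1) := by
      intro h
      have : a 0 ∈ F ∙ a 1 := h ▸ Submodule.mem_span_singleton_self _
      obtain ⟨c, hc⟩ := Submodule.mem_span_singleton.1 this
      rw [← hc] at h00
      simp [h10] at h00
    rw [← Set.ncard_pair hne]
    apply hmax
    constructor
    · rintro S (rfl | rfl)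
      · refine ⟨span_iso ?_, finrank_span_singleton hne0⟩
        rintro _ rfl _ rfl; exact halt _
      · refine ⟨span_iso ?_, finrank_span_singleton hne1⟩
        rintro _ rfl _ rfl; exact halt _
    · rintro S (rfl | rfl) T (rfl | rfl)
      · exact span_not_opp hne0 (halt _)
      · exact span_not_opp hne1 (ha _ (by omega) _ (by omega))
      · exact span_not_opp hne0 (ha _ (by omega) _ (by omega))
      · exact span_not_opp hne1 (halt _)
  have : Finite 𝓕i := Set.finite_of_ncard_pos (by omega)
  obtain ⟨P, hP, R, hR, hPR⟩ : ∃ P ∈ 𝓕i, ∃ R ∈ 𝓕i, P ≠ R :=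
    Set.one_lt_ncard_iff_nontrivial.1 h2
  obtain ⟨p, hp0, rfl⟩ : ∃ p : V, p ≠ 0 ∧ P = F ∙ p :=
    eq_span_of_finrank_one (hEKR.1 P hP).2
  obtain ⟨r, hr0, rfl⟩ : ∃ p : V, p ≠ 0 ∧ R = F ∙ p :=
    eq_span_of_finrank_one (hEKR.1 R hR).2
  have hpr : B p r = 0 := by
    by_contra h
    exact hEKR.2 _ hP _ hR (span_opp h)
  have hind : ∀ c : F, p ≠ c • r := by
    rintro c rfl
    apply hPR
    have hc : c ≠ 0 := by rintro rfl; simp at hp0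
    exact Submodule.span_singleton_smul_eq (IsUnit.mk0 c hc) r
  obtain ⟨a0, b0, hf, ha0, hb1⟩ := frame_two halt hnd hp0 hr0 hind hpr
  obtain ⟨a, b, hf', ha, hb⟩ := hf.extend halt hnd hdim (n - 2) (by omega)
  rw [show 2 + (n - 2) = n by omega] at hf'
  obtain ⟨hd, haa, hbb⟩ := hf'
  have ha0 : a 0 = p := by rw [ha 0 (by omega), ha0]
  have hb1 : b 1 = r := by rw [hb 1 (by omega), hb1]
  have hJ2 : ∀ j ∈ J, 2 ≤ j ∧ j ≤ n := by
    intro j hj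
    have := Finset.mem_Icc.1 (hJ hj)
    have : j ≠ 1 := fun h => hiJ (h ▸ hj)
    omega
  have hsplit : ∀ j ∈ insert 1 J, j = 1 ∨ (2 ≤ j ∧ j ≤ n) := by
    intro j hj
    rcases Finset.mem_insert.1 hj with h | h
    · exact Or.inl h
    · exact Or.inr (hJ2 j h)
  let S : V → (ℕ → V) → ℕ → Submodule F V := fun v a j => if j = 1 then F ∙ v else ispan F a j
  have hS1 : ∀ v a, S v a 1 = F ∙ v := fun v a => if_pos rfl
  have hS2 : ∀ v a j, 2 ≤ j → S v a j = ispan F a j := fun v a j hj => if_neg (by omega)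
  have key : ∀ (v : V) (a : ℕ → V), v ≠ 0 → (∀ i < n, ∀ j < n, B (a i) (a j) = 0) →
      (∀ j ≤ n, finrank F (ispan F a j) = j) → (∃ k < 2, a k = v) →
      (∃ F₁ : SFlag B (insert 1 J), F₁.space 1 = F ∙ v ∧ ∀ j ∈ J, F₁.space j = ispan F a j) := by
    intro v a hv hiso hfr hk
    obtain ⟨k, hk, rfl⟩ := hk
    refine ⟨mkFlag B _ (S (a k) a) ?_ ?_ ?_, ?_, ?_⟩
    · intro j hj
      rcases hsplit j hj with rfl | ⟨hj2, hjn⟩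
      · rw [hS1]; apply span_iso
        rintro _ rfl _ rfl; exact halt _
      · rw [hS2 _ _ _ hj2]
        exact ispan_iso fun i hi l hl => hiso i (by omega) l (by omega)
    · intro j hj
      rcases hsplit j hj with rfl | ⟨hj2, hjn⟩
      · rw [hS1]; exact finrank_span_singleton hv
      · rw [hS2 _ _ _ hj2]; exact hfr j hjn
    · intro j hj l hl hjl
      rcases hsplit j hj with rfl | ⟨hj2, hjn⟩
      · rcases hsplit l hl with rfl | ⟨hl2, hln⟩
        · exact le_rfl
        · rw [hS1, hS2 _ _ _ hl2, Submodule.span_singleton_le_iff_mem]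
          exact mem_ispan_self a (by omega)
      · rw [hS2 _ _ _ hj2, hS2 _ _ _ (by omega)]
        exact ispan_mono a hjl
    · rw [mkFlag_space _ _ _ _ _ _ _ (Finset.mem_insert_self _ _), hS1]
    · intro j hj
      rw [mkFlag_space _ _ _ _ _ _ _ (Finset.mem_insert_of_mem hj), hS2 _ _ _ (hJ2 j hj).1]
  obtain ⟨F₁, h11, h12⟩ := key p a hp0 haa (fun j hj => hd.finrank_left hj) ⟨0, by omega, ha0⟩
  obtain ⟨F₂, h21, h22⟩ := key r b hr0 hbb (fun j hj => hd.finrank_right hj) ⟨1, by omega, hb1⟩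
  refine ⟨_, hP, _, hR, F₁, F₂, h11, h21, ?_⟩
  intro j hj
  rw [h12 j hj, h22 j hj]
  exact hd.opp (hJ2 j hj).2

lemma case_n [Fintype F] [FiniteDimensional F V] (n : ℕ) (hn : 3 ≤ n)
    (B : V →ₗ[F] V →ₗ[F] F) (halt : IsAltForm B) (hnd : NondegForm B)
    (hdim : Module.finrank F V = 2 * n)
    (𝓕i : Set (Submodule F V)) (hEKR : IsEKRSpaces B n 𝓕i)
    (hmax : ∀ 𝓖 : Set (Submodule F V), IsEKRSpaces B n 𝓖 → 𝓖.ncard ≤ 𝓕i.ncard)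
    (J : Finset ℕ) (hJ : J ⊆ Finset.Icc 1 n) (hiJ : n ∉ J) :
    ∃ I₁ ∈ 𝓕i, ∃ I₂ ∈ 𝓕i, ∃ F₁ F₂ : SFlag B (insert n J),
      SFlag.space F₁ n = I₁ ∧ SFlag.space F₂ n = I₂ ∧
      ∀ j ∈ J, bperp B (SFlag.space F₁ j) ⊓ SFlag.space F₂ j = ⊥ := by
  have hnb : ∀ T : Submodule F V, finrank F T = n → T ≠ ⊥ := by
    rintro T hT rfl
    rw [finrank_bot] at hT; omega
  have hpos : 0 < 𝓕i.ncard := by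
    obtain ⟨a, b, hd, ha, -⟩ := exists_frame halt hnd hdim
    have h1 : 1 ≤ 𝓕i.ncard := by
      rw [← Set.ncard_singleton (ispan F a n)]
      apply hmax
      have hi := ispan_iso ha
      have hf := hd.finrank_left le_rfl
      constructor
      · rintro S rfl
        exact ⟨hi, hf⟩
      · rintro S rfl T rfl
        exact not_opp_self hi (hnb _ hf)
    exact h1
  have hfin : 𝓕i.Finite := Set.finite_of_ncard_pos hpos
  have hopp : ∀ S T : Submodule F V, IsTotIso B S → finrank F S = n →
      (SpaceOpp B S T ↔ S ⊓ T = ⊥) := by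
    intro S T hS hSn
    unfold SpaceOpp
    rw [perp_eq_self halt hnd hdim hS hSn]
  obtain ⟨S, hS, T, hT, hST⟩ : ∃ S ∈ 𝓕i, ∃ T ∈ 𝓕i, finrank F (T ⊓ S : Submodule F V) = 1 := by
    by_contra! hcon
    have h2 : ∀ S ∈ 𝓕i, ∀ T ∈ 𝓕i, 2 ≤ finrank F (T ⊓ S : Submodule F V) := by
      intro S hS T hT
      have h1 := hcon S hS T hT
      have h0 : finrank F (T ⊓ S : Submodule F V) ≠ 0 := by
        intro h0
        rw [Submodule.finrank_eq_zero] at h0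
        exact hEKR.2 T hT S hS ((hopp T S (hEKR.1 T hT).1 (hEKR.1 T hT).2).2 h0)
      omega
    obtain ⟨S, hS⟩ := Set.nonempty_of_ncard_ne_zero hpos.ne'
    have hno : ∀ d : ℕ, ∀ T ∈ 𝓕i, finrank F (T ⊓ S : Submodule F V) = d → False := by
      intro d
      induction d using Nat.strong_induction_on with
      | _ d ih =>
        intro T hT hd
        obtain ⟨p, hp, hp0⟩ : ∃ p ∈ T ⊓ S, p ≠ 0 := by
          apply Submodule.exists_mem_ne_zero_of_ne_bot
          intro h0
          have := h2 S hS T hT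
          rw [h0, finrank_bot] at this
          omega
        obtain ⟨T', hT', hT'n, hlt, hR⟩ := exists_neighbour halt hnd hdim (hEKR.1 S hS).1
          (hEKR.1 T hT).1 (hEKR.1 T hT).2 hp0 hp.2 hp.1
        refine ih _ (hd ▸ hlt) T' ?_ rfl
        by_contra hmem
        have hE : IsEKRSpaces B n (insert T' 𝓕i) := by
          constructor
          · rintro U (rfl | hU)
            · exact ⟨hT', hT'n⟩
            · exact hEKR.1 U hU
          · rintro U (rfl | hU) W (rfl | hW)
            · exact not_opp_self hT' (hnb _ hT'n)
            · rw [hopp _ _ hT' hT'n]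
              exact hR W (h2 W hW T hT)
            · rw [hopp _ _ (hEKR.1 U hU).1 (hEKR.1 U hU).2, inf_comm]
              exact hR U (h2 U hU T hT)
            · exact hEKR.2 U hU W hW
        have := hmax _ hE
        rw [Set.ncard_insert_of_notMem hmem hfin] at this
        omega
    exact hno _ S hS rfl
  obtain ⟨hSi, hSn⟩ := hEKR.1 S hS
  obtain ⟨hTi, hTn⟩ := hEKR.1 T hT
  obtain ⟨H₁, hH₁, hb1, hs1, hf1⟩ := exists_hyper T (T ⊓ S) inf_le_left
  obtain ⟨H₂, hH₂, hb2, hs2, hf2⟩ := exists_hyper S (T ⊓ S) inf_le_right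
  rw [hST] at hf1 hf2
  have hHopp : bperp B H₁ ⊓ H₂ = ⊥ := by
    rw [eq_bot_iff, ← hb2]
    rintro x ⟨hx, hx2⟩
    refine ⟨hx2, ?_, hH₂ hx2⟩
    rw [← perp_eq_self halt hnd hdim hTi hTn]
    show x ∈ bperp B T
    rw [mem_bperp', ← hs1]
    intro w hw
    obtain ⟨h, hh, z, hz, rfl⟩ := Submodule.mem_sup.1 hw
    rw [map_add, LinearMap.add_apply, (mem_bperp' B _ _).1 hx h hh, hSi z hz.2 x (hH₂ hx2),
      add_zero]
  obtain ⟨a, b, hd, ha, hb⟩ := exists_dualsys (m := n - 1) (by omega) (by omega) hHopp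
  have hJ2 : ∀ j ∈ J, j ≤ n - 1 := by
    intro j hj
    have := Finset.mem_Icc.1 (hJ hj)
    have : j ≠ n := fun h => hiJ (h ▸ hj)
    omega
  have hsplit : ∀ j ∈ insert n J, j = n ∨ j ≤ n - 1 := by
    intro j hj
    rcases Finset.mem_insert.1 hj with h | h
    · exact Or.inl h
    · exact Or.inr (hJ2 j h)
  have key : ∀ (M : Submodule F V) (a : ℕ → V), IsTotIso B M → finrank F M = n →
      (∀ i < n - 1, a i ∈ M) → (∀ j ≤ n - 1, finrank F (ispan F a j) = j) →
      (∃ F₁ : SFlag B (insert n J), F₁.space n = M ∧ ∀ j ∈ J, F₁.space j = ispan F a j) := by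
    intro M a hM hMn haM hfr
    have hle : ∀ j ≤ n - 1, ispan F a j ≤ M := fun j hj => ispan_le fun i hi => haM i (by omega)
    let U : ℕ → Submodule F V := fun j => if j = n then M else ispan F a j
    have hU1 : U n = M := if_pos rfl
    have hU2 : ∀ j ≤ n - 1, U j = ispan F a j := fun j hj => if_neg (by omega)
    refine ⟨mkFlag B _ U ?_ ?_ ?_, ?_, ?_⟩
    · intro j hj
      rcases hsplit j hj with rfl | hj2
      · rw [hU1]; exact hM
      · rw [hU2 _ hj2]; exact iso_mono (hle j hj2) hM
    · intro j hj
      rcases hsplit j hj with rfl | hj2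
      · rw [hU1]; exact hMn
      · rw [hU2 _ hj2]; exact hfr j hj2
    · intro j hj l hl hjl
      rcases hsplit l hl with rfl | hl2
      · rcases hsplit j hj with rfl | hj2
        · exact le_rfl
        · rw [hU1, hU2 _ hj2]; exact hle j hj2
      · rw [hU2 _ hl2, hU2 _ (by omega)]
        exact ispan_mono a hjl
    · rw [mkFlag_space _ _ _ _ _ _ _ (Finset.mem_insert_self _ _), hU1]
    · intro j hj
      rw [mkFlag_space _ _ _ _ _ _ _ (Finset.mem_insert_of_mem hj), hU2 _ (hJ2 j hj)]
  obtain ⟨F₁, h11, h12⟩ := key T a hTi hTn (fun i hi => hH₁ (ha i hi))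
    (fun j hj => hd.finrank_left hj)
  obtain ⟨F₂, h21, h22⟩ := key S b hSi hSn (fun i hi => hH₂ (hb i hi))
    (fun j hj => hd.finrank_right hj)
  refine ⟨_, hT, _, hS, F₁, F₂, h11, h21, ?_⟩
  intro j hj
  rw [h12 j hj, h22 j hj]
  exact hd.opp (hJ2 j hj)

end Aux2

theorem stmt_8 {F V : Type} [Field F] [Fintype F] [AddCommGroup V] [Module F V]
    [FiniteDimensional F V] (n q : ℕ) (hn : 3 ≤ n) (hq : Fintype.card F = q)
    (B : V →ₗ[F] V →ₗ[F] F) (halt : IsAltForm B) (hnd : NondegForm B)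
    (hdim : Module.finrank F V = 2 * n)
    (i : ℕ) (hi : i = 1 ∨ i = n)
    (𝓕i : Set (Submodule F V)) (hEKR : IsEKRSpaces B i 𝓕i)
    (hmax : ∀ 𝓖 : Set (Submodule F V), IsEKRSpaces B i 𝓖 → 𝓖.ncard ≤ 𝓕i.ncard)
    (J : Finset ℕ) (hJ : J ⊆ Finset.Icc 1 n) (hJne : J.Nonempty) (hiJ : i ∉ J) :
    ∃ I₁ ∈ 𝓕i, ∃ I₂ ∈ 𝓕i, ∃ F₁ F₂ : SFlag B (insert i J),
      SFlag.space F₁ i = I₁ ∧ SFlag.space F₂ i = I₂ ∧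
      ∀ j ∈ J, bperp B (SFlag.space F₁ j) ⊓ SFlag.space F₂ j = ⊥ := by

  rcases hi with rfl | rfl
  · exact case_one n hn B halt hnd hdim 𝓕i hEKR hmax J hJ hiJ
  · exact case_n _ hn B halt hnd hdim 𝓕i hEKR hmax J hJ hiJ
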